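/- arXiv:1707.00052 — 2 statements merged into one kernel-verified Lean document; each statement's English description precedes it below -/
import Mathlib

section
/- For all integers q ≥ 2, ℓ ≥ 1, t ≥ 1 and n ≥ ℓ, a code C ⊆ Z_q^n is t-tandem-deletion correcting (for deletions of length ℓ) if and only if d_{τ,ℓ}(c₁, c₂) ≥ 2t+1 for all distinct c₁, c₂ ∈ C. -/
/-!
The derivative `φ_ℓ` turns a tandem deletion of length `ℓ` into the removal of a block of `ℓ`
consecutive zeros from `v = derivV q ℓ x`, with the prefix `x.take ℓ` unchanged (`TDel.zDel`), and
every such removal arises this way (`exists_tDel_of_zDel`). Since `φ_ℓ` is injective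
(`eq_of_derivV_eq`), everything can be decided on the level of `v`.

Removing `ℓ` zeros keeps the trunk and lowers one entry of the signature by one, so the signature
moves by `ℓ1`-distance at most one (`ZDel.invariants`). Hence two words
reaching a common word in at most `t` steps each have equal roots, and by the triangle inequality
their signatures are at `ℓ1`-distance at most `2t`.

Conversely, two vectors with equal trunk both reach the vector whose zero runs are the entrywise
minima, using `ℓ1`-distance many removals in total (`exists_common`). For codewords of equal length
the two numbers of removals agree, because each step removes `ℓ` symbols; so if the distance is at
most `2t`, each of them is at most `t`, and the spheres intersect.
-/

namespace DupPaper

variable {α : Type*}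

/-- `y` is obtained from `x` by one tandem duplication of length `ℓ`. -/
def TDup (ℓ : ℕ) (x y : List α) : Prop :=
  ∃ u v w : List α, v.length = ℓ ∧ x = u ++ v ++ w ∧ y = u ++ v ++ v ++ w

/-- `y` is obtained from `x` by one tandem deletion of length `ℓ`. -/
def TDel (ℓ : ℕ) (x y : List α) : Prop :=
  ∃ u v w : List α, v.length = ℓ ∧ x = u ++ v ++ v ++ w ∧ y = u ++ v ++ w

/-- `y` is obtained from `x` by one palindromic duplication of length `ℓ`. -/
def PDup (ℓ : ℕ) (x y : List α) : Prop :=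
  ∃ u v w : List α, v.length = ℓ ∧ x = u ++ v ++ w ∧ y = u ++ v ++ v.reverse ++ w

/-- `y` is obtained from `x` by one palindromic deletion of length `ℓ`. -/
def PDel (ℓ : ℕ) (x y : List α) : Prop :=
  ∃ u v w : List α, v.length = ℓ ∧ x = u ++ v ++ v.reverse ++ w ∧ y = u ++ v ++ w

/-- `y` is reached from `x` by exactly `k` steps of the relation `rel`. -/
def reachK (rel : List α → List α → Prop) : ℕ → List α → List α → Prop
  | 0, x, y => x = y
  | k + 1, x, y => ∃ z, rel x z ∧ reachK rel k z y

/-- The sphere of all words reachable from `x` by at most `t` operations of type `rel`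
(in particular it contains `x` itself). -/
def sphere (rel : List α → List α → Prop) (t : ℕ) (x : List α) : Set (List α) :=
  {y | ∃ k ≤ t, reachK rel k x y}

/-- A code `C` is `t`-error correcting for the error type `rel` if distinct codewords have
disjoint spheres. -/
def Correcting (rel : List α → List α → Prop) (t : ℕ) (C : Set (List α)) : Prop :=
  ∀ c₁ ∈ C, ∀ c₂ ∈ C, (sphere rel t c₁ ∩ sphere rel t c₂).Nonempty → c₁ = c₂

/-- The list of maximal runs (maximal blocks of identical consecutive symbols) of a word. -/
def runs [DecidableEq α] : List α → List (List α)
  | [] => []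
  | a :: rest =>
    match runs rest with
    | [] => [[a]]
    | r :: rs => if r.head? = some a then (a :: r) :: rs else [a] :: r :: rs

/-- `r(x)`: the number of runs of `x`. -/
def numRuns [DecidableEq α] (x : List α) : ℕ := (runs x).length

/-- `r_i(x)`: the number of runs of `x` of length exactly `i`. -/
def numRunsEq [DecidableEq α] (x : List α) (i : ℕ) : ℕ :=
  ((runs x).filter (fun r => r.length = i)).length

/-- `r_{≥ i}(x)`: the number of runs of `x` of length at least `i`. -/
def numRunsGe [DecidableEq α] (x : List α) (i : ℕ) : ℕ :=
  ((runs x).filter (fun r => i ≤ r.length)).length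

/-- `r_{I,2}(x)`: the number of runs of length exactly `2` located in the interior of `x`,
i.e. runs that are neither the first nor the last run of `x`. -/
def numInteriorRuns2 [DecidableEq α] (x : List α) : ℕ :=
  ((((runs x).drop 1).dropLast).filter (fun r => r.length = 2)).length

/-- The second component `v` of the `ℓ`-step derivative `φ_ℓ(x) = (u, v)`:
`v = (x_{ℓ+1}, …, x_n) − (x_1, …, x_{n−ℓ})` componentwise in `Z_q`. -/
def derivV (q ℓ : ℕ) (x : List (ZMod q)) : List (ZMod q) :=
  List.zipWith (· - ·) (x.drop ℓ) x

/-- Hamming weight: the number of nonzero entries. -/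
def wtH {q : ℕ} (v : List (ZMod q)) : ℕ := (v.filter (fun a => a ≠ 0)).length

/-- The lengths `(m_0, m_1, …, m_p)` of the (possibly empty) maximal zero runs of `v`,
where `v = (0^{m_0}, w_1, 0^{m_1}, w_2, …, w_p, 0^{m_p})` with all `w_i ≠ 0`. -/
def zeroRunLengths {q : ℕ} : List (ZMod q) → List ℕ
  | [] => [0]
  | a :: rest =>
    let t := zeroRunLengths rest
    if a = 0 then
      match t with
      | [] => [1]
      | m :: ms => (m + 1) :: ms
    else 0 :: t

/-- The `ℓ`-zero signature `σ_ℓ(v) = (⌊m_0/ℓ⌋, …, ⌊m_p/ℓ⌋)` of `v = derivV q ℓ x`. -/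
def sig (q ℓ : ℕ) (x : List (ZMod q)) : List ℕ :=
  (zeroRunLengths (derivV q ℓ x)).map (· / ℓ)

/-- The trunk `μ_ℓ(v)`: every maximal zero run of length `m` is shortened to length
`m mod ℓ`. -/
def trunk (q ℓ : ℕ) (v : List (ZMod q)) : List (ZMod q) :=
  ((runs v).map (fun r =>
    if r.head? = some (0 : ZMod q) then List.replicate (r.length % ℓ) (0 : ZMod q) else r)).flatten

/-- The root `ρ_ℓ(x) = (u, μ_ℓ(v))` where `φ_ℓ(x) = (u, v)` is the `ℓ`-step derivative. -/
def root (q ℓ : ℕ) (x : List (ZMod q)) : List (ZMod q) × List (ZMod q) :=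
  (x.take ℓ, trunk q ℓ (derivV q ℓ x))

/-- `ℓ1`-distance of two lists of naturals. -/
def l1diff (a b : List ℕ) : ℕ := (List.zipWith (fun s t => max s t - min s t) a b).sum

/-- The tandem duplication distance `d_{τ,ℓ}`. -/
def tdDist (q ℓ : ℕ) (x₁ x₂ : List (ZMod q)) : ℕ∞ :=
  if root q ℓ x₁ = root q ℓ x₂ then (l1diff (sig q ℓ x₁) (sig q ℓ x₂) : ℕ∞) else ⊤

/-- The palindromic duplication `π_{i,ℓ}(x) = (u v v^R w)` at position `i`,
where `x = (u v w)`, `|u| = i`, `|v| = ℓ`. -/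
def pdupAt (i ℓ : ℕ) (x : List α) : List α :=
  x.take (i + ℓ) ++ ((x.drop i).take ℓ).reverse ++ x.drop (i + ℓ)

/-- The result `(u v w)` of the palindromic deletion `π^δ_{i,ℓ}` applied to
`x = (u v v^R w)` with `|u| = i`, `|v| = ℓ`. -/
def pdelAt (i ℓ : ℕ) (x : List α) : List α :=
  x.take (i + ℓ) ++ x.drop (i + 2 * ℓ)

/-- The palindromic deletion `π^δ_{i,ℓ}` is defined at position `i` of `x`, i.e. `x` has the
form `(u v v^R w)` with `|u| = i` and `|v| = ℓ`. -/
def PDelDefinedAt (q ℓ i : ℕ) (x : List (ZMod q)) : Prop :=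
  ∃ u v w : List (ZMod q), u.length = i ∧ v.length = ℓ ∧ x = u ++ v ++ v.reverse ++ w

/-- `A(n', ℓ', ω)`: the number of words in `Z_q^{n'}` whose maximal zero runs all have length
at most `ℓ'` and whose Hamming weight is `ω`. -/
noncomputable def Acount (q n' ℓ' ω : ℕ) : ℕ :=
  {x : Fin n' → ZMod q | wtH (List.ofFn x) = ω ∧
    ∀ r ∈ runs (List.ofFn x), r.head? = some (0 : ZMod q) → r.length ≤ ℓ'}.ncard

/-- Integer binomial coefficient with the conventions `C(a,b) = 0` for `a ≥ 0 > b` or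
`0 ≤ a < b`, `C(-1,-1) = 1`, and `C(a,-1) = 0` for `a ≥ 0`. -/
def ichoose (a b : ℤ) : ℕ :=
  if a = -1 ∧ b = -1 then 1
  else if 0 ≤ a ∧ 0 ≤ b then Nat.choose a.toNat b.toNat
  else 0

/-- `r^{(0)}(A^π_ℓ(x))`: the number of maximal blocks of consecutive all-zero columns of the
matrix `A^π_ℓ(x) ∈ Z_q^{ℓ × (n−2ℓ+1)}` whose entry in row `s` and column `c`
(`1 ≤ s ≤ ℓ`, `1 ≤ c ≤ n−2ℓ+1`) is `x_{2ℓ+c−s} − x_{c+s−1}`. -/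
def zeroColBlocks (q ℓ n : ℕ) (x : List (ZMod q)) : ℕ :=
  ((runs ((List.range (n - 2 * ℓ + 1)).map (fun c =>
      (List.range ℓ).all (fun s =>
        x.getD (2 * ℓ + c - s - 1) (0 : ZMod q) = x.getD (c + s) (0 : ZMod q))))).filter
    (fun r => r.head? = some true)).length

/-! ### Reachability -/

/-- `v'` is obtained from `v` by removing a block of `ℓ` consecutive zeros. -/
def ZDel {q : ℕ} (ℓ : ℕ) (v v' : List (ZMod q)) : Prop :=
  ∃ a b : List (ZMod q), v = a ++ List.replicate ℓ 0 ++ b ∧ v' = a ++ b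

lemma reachK_trans {rel : List α → List α → Prop} {j k : ℕ} {x y z : List α}
    (h : reachK rel j x y) (h' : reachK rel k y z) : reachK rel (j + k) x z := by
  induction j generalizing x with
  | zero =>
    have hxy : x = y := h
    subst hxy
    simpa using h'
  | succ j ih =>
    obtain ⟨s, hs, hr⟩ := h
    rw [Nat.succ_add]
    exact ⟨s, hs, ih hr⟩

lemma reachK_append_left {q ℓ k : ℕ} (a : List (ZMod q)) {v v' : List (ZMod q)}
    (h : reachK (ZDel ℓ) k v v') : reachK (ZDel ℓ) k (a ++ v) (a ++ v') := by
  induction k generalizing v with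
  | zero => exact congrArg (a ++ ·) h
  | succ k ih =>
    obtain ⟨s, ⟨b, c, rfl, rfl⟩, hr⟩ := h
    exact ⟨a ++ (b ++ c), ⟨a ++ b, c, by simp, by simp⟩, ih hr⟩

lemma reachK_zDel_length {q ℓ k : ℕ} {v v' : List (ZMod q)}
    (h : reachK (ZDel ℓ) k v v') : v.length = v'.length + k * ℓ := by
  induction k generalizing v with
  | zero =>
    have hv : v = v' := h
    simp [hv]
  | succ k ih =>
    obtain ⟨s, ⟨b, c, rfl, rfl⟩, hr⟩ := h
    have := ih hr
    simp only [List.length_append, List.length_replicate] at this ⊢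
    rw [Nat.succ_mul]
    omega

lemma reachK_zeros {q : ℕ} (ℓ k r : ℕ) (x : List (ZMod q)) :
    reachK (ZDel ℓ) k (List.replicate (r + k * ℓ) 0 ++ x) (List.replicate r 0 ++ x) := by
  induction k with
  | zero => simp [reachK]
  | succ k ih =>
    refine ⟨_, ⟨List.replicate (r + k * ℓ) 0, x, ?_, rfl⟩, ih⟩
    rw [← List.replicate_add, Nat.succ_mul, Nat.add_assoc]

/-- If `m₁ ≤ m₂` then no step is taken: the natural subtraction is then `0`. -/
lemma reachK_zeros_min {q : ℕ} (ℓ m₁ m₂ : ℕ) (h : m₁ % ℓ = m₂ % ℓ)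
    (x : List (ZMod q)) :
    reachK (ZDel ℓ) (m₁ / ℓ - m₂ / ℓ) (List.replicate m₁ 0 ++ x)
      (List.replicate (min m₁ m₂) 0 ++ x) := by
  rcases le_total m₁ m₂ with hle | hle
  · have : m₁ / ℓ - m₂ / ℓ = 0 := Nat.sub_eq_zero_of_le (Nat.div_le_div_right hle)
    rw [this, min_eq_left hle]
    exact rfl
  · have h1 := Nat.mod_add_div' m₁ ℓ
    have h2 := Nat.mod_add_div' m₂ ℓ
    have h3 : m₁ = m₂ + (m₁ / ℓ - m₂ / ℓ) * ℓ := by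
      have := Nat.mul_le_mul_right ℓ (Nat.div_le_div_right (c := ℓ) hle)
      rw [Nat.sub_mul]
      omega
    rw [min_eq_right hle]
    have := reachK_zeros (q := q) ℓ (m₁ / ℓ - m₂ / ℓ) m₂ x
    rwa [← h3] at this

/-! ### Zero runs, trunk and signature -/

/-- Every vector is a zero run, or a zero run followed by a nonzero entry and a shorter vector. -/
lemma zeroRun_induction {q : ℕ} {P : List (ZMod q) → Prop}
    (zeros : ∀ m, P (List.replicate m 0))
    (step : ∀ m w v, w ≠ 0 → P v → P (List.replicate m 0 ++ w :: v)) (v : List (ZMod q)) : P v := by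
  suffices h : ∀ (v : List (ZMod q)) m, P (List.replicate m 0 ++ v) by simpa using h v 0
  intro v
  induction v with
  | nil => simpa using zeros
  | cons a v ih =>
    intro m
    by_cases ha : a = 0
    · subst ha
      have := ih (m + 1)
      rwa [List.replicate_succ', List.append_assoc] at this
    · exact step m a v ha (by simpa using ih 0)

lemma runs_eq_cons [DecidableEq α] (a : α) (l : List α) :
    ∃ r rs, runs (a :: l) = (a :: r) :: rs := by
  rw [runs]
  split
  · exact ⟨_, _, rfl⟩
  · split_ifs
    · exact ⟨_, _, rfl⟩
    · exact ⟨_, _, rfl⟩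

lemma runs_replicate [DecidableEq α] (a : α) (m : ℕ) :
    runs (List.replicate (m + 1) a) = [List.replicate (m + 1) a] := by
  induction m with
  | zero => simp [runs]
  | succ m ih =>
    rw [List.replicate_succ, runs, ih]
    simp [List.replicate_succ]

lemma runs_replicate_append [DecidableEq α] (a w : α) (h : w ≠ a) (m : ℕ) (l : List α) :
    runs (List.replicate (m + 1) a ++ w :: l) = List.replicate (m + 1) a :: runs (w :: l) := by
  obtain ⟨r, rs, hr⟩ := runs_eq_cons w l
  induction m with
  | zero =>
    rw [List.replicate_succ, List.replicate_zero, List.cons_append, List.nil_append, runs, hr]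
    simp [h]
  | succ m ih =>
    rw [List.replicate_succ, List.cons_append, runs, ih]
    simp [List.replicate_succ]

lemma trunk_replicate (q ℓ m : ℕ) :
    trunk q ℓ (List.replicate m 0) = List.replicate (m % ℓ) 0 := by
  cases m with
  | zero => simp [trunk, runs]
  | succ m => rw [trunk, runs_replicate]; simp [List.head?_replicate]

lemma trunk_cons (q ℓ : ℕ) (w : ZMod q) (hw : w ≠ 0) (v : List (ZMod q)) :
    trunk q ℓ (w :: v) = w :: trunk q ℓ v := by
  cases v with
  | nil => simp [trunk, runs, hw]
  | cons a v =>
    obtain ⟨r, rs, hr⟩ := runs_eq_cons a v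
    rw [trunk, trunk, runs, hr]
    by_cases h : a = w
    · subst h; simp [hw]
    · simp [h, hw]

lemma trunk_zeros_append (q ℓ m : ℕ) (w : ZMod q) (hw : w ≠ 0) (v : List (ZMod q)) :
    trunk q ℓ (List.replicate m 0 ++ w :: v) = List.replicate (m % ℓ) 0 ++ w :: trunk q ℓ v := by
  rw [← trunk_cons q ℓ w hw]
  cases m with
  | zero => simp
  | succ m =>
    rw [trunk, runs_replicate_append _ _ hw]
    simp [List.head?_replicate, trunk]

/-- The signature as a function of the second component `v` of the derivative. -/
def vsig {q : ℕ} (ℓ : ℕ) (v : List (ZMod q)) : List ℕ := (zeroRunLengths v).map (· / ℓ)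

lemma zeroRunLengths_zeros (q m : ℕ) :
    zeroRunLengths (List.replicate m (0 : ZMod q)) = [m] := by
  induction m with
  | zero => rfl
  | succ m ih => simp [List.replicate_succ, zeroRunLengths, ih]

lemma zeroRunLengths_zeros_append {q : ℕ} (m : ℕ) (w : ZMod q) (hw : w ≠ 0) (v : List (ZMod q)) :
    zeroRunLengths (List.replicate m 0 ++ w :: v) = m :: zeroRunLengths v := by
  induction m with
  | zero => simp [zeroRunLengths, hw]
  | succ m ih => simp [List.replicate_succ, zeroRunLengths, ih]

lemma vsig_zeros (q ℓ m : ℕ) : vsig ℓ (List.replicate m (0 : ZMod q)) = [m / ℓ] := by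
  simp [vsig, zeroRunLengths_zeros]

lemma vsig_zeros_append {q : ℕ} (ℓ m : ℕ) (w : ZMod q) (hw : w ≠ 0) (v : List (ZMod q)) :
    vsig ℓ (List.replicate m 0 ++ w :: v) = (m / ℓ) :: vsig ℓ v := by
  simp [vsig, zeroRunLengths_zeros_append m w hw]

lemma l1diff_cons (a b : ℕ) (s t : List ℕ) :
    l1diff (a :: s) (b :: t) = (a - b) + (b - a) + l1diff s t := by
  simp only [l1diff, List.zipWith_cons_cons, List.sum_cons]
  omega

lemma l1diff_self (s : List ℕ) : l1diff s s = 0 := by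
  induction s with
  | nil => rfl
  | cons a s ih => simp [l1diff_cons, ih]

lemma l1diff_comm (s t : List ℕ) : l1diff s t = l1diff t s := by
  induction s generalizing t with
  | nil => simp [l1diff]
  | cons a s ih =>
    cases t with
    | nil => simp [l1diff]
    | cons b t => rw [l1diff_cons, l1diff_cons, ih]; omega

/-- The length hypotheses are needed because `l1diff` truncates to the shorter list. -/
lemma l1diff_triangle (s t r : List ℕ) (h : s.length = t.length) (h' : t.length = r.length) :
    l1diff s r ≤ l1diff s t + l1diff t r := by
  induction s generalizing t r with
  | nil => simp [l1diff]
  | cons a s ih =>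
    cases t with
    | nil => simp at h
    | cons b t =>
      cases r with
      | nil => simp at h'
      | cons c r =>
        have := ih t r (by simpa using h) (by simpa using h')
        simp only [l1diff_cons]
        omega

/-- Removing `ℓ` zeros keeps the trunk and moves the signature by `ℓ1`-distance at most one. -/
lemma ZDel.invariants {q ℓ : ℕ} (hℓ : 1 ≤ ℓ) {v v' : List (ZMod q)} (h : ZDel ℓ v v') :
    trunk q ℓ v = trunk q ℓ v' ∧ (vsig ℓ v).length = (vsig ℓ v').length ∧
      l1diff (vsig ℓ v) (vsig ℓ v') ≤ 1 := by
  obtain ⟨a, b, rfl, rfl⟩ := h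
  induction a using zeroRun_induction with
  | zeros j =>
    induction b using zeroRun_induction with
    | zeros m =>
      simp only [← List.replicate_add, trunk_replicate, vsig_zeros]
      have h1 : j + ℓ + m = (j + m) + ℓ := by omega
      refine ⟨by rw [h1, Nat.add_mod_right], rfl, ?_⟩
      rw [h1, Nat.add_div_right _ hℓ, l1diff_cons, l1diff_self]
      omega
    | step m w b hw _ =>
      simp only [← List.append_assoc, ← List.replicate_add, trunk_zeros_append q ℓ _ w hw,
        vsig_zeros_append ℓ _ w hw]
      have h1 : j + ℓ + m = (j + m) + ℓ := by omega
      refine ⟨by rw [h1, Nat.add_mod_right], rfl, ?_⟩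
      rw [h1, Nat.add_div_right _ hℓ, l1diff_cons, l1diff_self]
      omega
  | step m w a hw ih =>
    simp only [List.append_assoc, List.cons_append, trunk_zeros_append q ℓ _ w hw,
        vsig_zeros_append ℓ _ w hw, l1diff_cons, List.length_cons] at ih ⊢
    obtain ⟨h1, h2, h3⟩ := ih
    refine ⟨by rw [h1], by rw [h2], by omega⟩

lemma zeros_append_inj {q m₁ m₂ : ℕ} {w₁ w₂ : ZMod q} (h₁ : w₁ ≠ 0) (h₂ : w₂ ≠ 0)
    {x₁ x₂ : List (ZMod q)}
    (h : List.replicate m₁ 0 ++ w₁ :: x₁ = List.replicate m₂ 0 ++ w₂ :: x₂) :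
    m₁ = m₂ ∧ w₁ = w₂ ∧ x₁ = x₂ := by
  induction m₁ generalizing m₂ with
  | zero =>
    cases m₂ with
    | zero => simpa using h
    | succ m => simp [List.replicate_succ, h₁] at h
  | succ m₁ ih =>
    cases m₂ with
    | zero => simp [List.replicate_succ, h₂.symm] at h
    | succ m =>
      obtain ⟨a, b⟩ := ih (m₂ := m) (by simpa [List.replicate_succ] using h)
      exact ⟨by rw [a], b⟩

lemma zeros_ne_append {q m₁ m₂ : ℕ} {w : ZMod q} (hw : w ≠ 0) {x : List (ZMod q)} :
    List.replicate m₁ 0 ≠ List.replicate m₂ 0 ++ w :: x := by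
  intro h
  have : w ∈ List.replicate m₁ (0 : ZMod q) := by rw [h]; simp
  exact hw (List.eq_of_mem_replicate this)

/-- Vectors with the same trunk reach the vector with the entrywise minimal zero runs, with as many
removals in total as the distance of the signatures. -/
lemma exists_common {q ℓ : ℕ} (v₁ v₂ : List (ZMod q))
    (h : trunk q ℓ v₁ = trunk q ℓ v₂) :
    ∃ v k₁ k₂, reachK (ZDel ℓ) k₁ v₁ v ∧ reachK (ZDel ℓ) k₂ v₂ v ∧
      k₁ + k₂ = l1diff (vsig ℓ v₁) (vsig ℓ v₂) := by
  induction v₁ using zeroRun_induction generalizing v₂ with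
  | zeros m₁ =>
    induction v₂ using zeroRun_induction with
    | zeros m₂ =>
      rw [trunk_replicate, trunk_replicate] at h
      have hm : m₁ % ℓ = m₂ % ℓ := by simpa using congrArg List.length h
      refine ⟨_, _, _, by simpa using reachK_zeros_min (q := q) ℓ m₁ m₂ hm [],
        by simpa [min_comm] using reachK_zeros_min (q := q) ℓ m₂ m₁ hm.symm [], ?_⟩
      rw [vsig_zeros, vsig_zeros, l1diff_cons]
      simp [l1diff]
    | step m₂ w v₂ hw _ =>
      rw [trunk_replicate, trunk_zeros_append _ _ _ _ hw] at h
      exact absurd h (zeros_ne_append hw)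
  | step m₁ w v₁ hw ih =>
    induction v₂ using zeroRun_induction with
    | zeros m₂ =>
      rw [trunk_replicate, trunk_zeros_append _ _ _ _ hw] at h
      exact absurd h.symm (zeros_ne_append hw)
    | step m₂ w' v₂ hw' _ =>
      rw [trunk_zeros_append _ _ _ _ hw, trunk_zeros_append _ _ _ _ hw'] at h
      obtain ⟨hm, rfl, ht⟩ := zeros_append_inj hw hw' h
      obtain ⟨v, k₁, k₂, r₁, r₂, hk⟩ := ih v₂ ht
      refine ⟨List.replicate (min m₁ m₂) 0 ++ w :: v, _, _,
        reachK_trans (reachK_zeros_min ℓ m₁ m₂ hm _)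
          (reachK_append_left _ (reachK_append_left [w] r₁)),
        reachK_trans (min_comm m₁ m₂ ▸ reachK_zeros_min ℓ m₂ m₁ hm.symm _)
          (reachK_append_left _ (reachK_append_left [w] r₂)), ?_⟩
      rw [vsig_zeros_append _ _ _ hw, vsig_zeros_append _ _ _ hw, l1diff_cons]
      omega

/-! ### Tandem deletions and the derivative -/

lemma length_derivV (q ℓ : ℕ) (x : List (ZMod q)) : (derivV q ℓ x).length = x.length - ℓ := by
  simp [derivV]

lemma derivV_append (q ℓ : ℕ) (u v z : List (ZMod q)) (hv : v.length = ℓ) :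
    derivV q ℓ (u ++ v ++ z) = derivV q ℓ (u ++ v) ++ List.zipWith (· - ·) z (v ++ z) := by
  have h1 : (u ++ v ++ z).drop ℓ = (u ++ v).drop ℓ ++ z :=
    List.drop_append_of_le_length (by simp [hv])
  have h2 : ((u ++ v).drop ℓ).length = u.length := by simp [hv]
  have h3 : derivV q ℓ (u ++ v) = List.zipWith (· - ·) ((u ++ v).drop ℓ) u := by
    have := List.zipWith_append (f := fun a b : ZMod q => a - b) (l₁' := []) (l₂' := v) h2
    rw [List.append_nil] at this
    simpa [derivV] using this
  rw [h3, derivV, h1, List.append_assoc u v z, List.zipWith_append h2]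

lemma zipWith_sub_self {q : ℕ} (v : List (ZMod q)) :
    List.zipWith (· - ·) v v = List.replicate v.length 0 := by
  induction v with
  | nil => rfl
  | cons a v ih => simp [List.replicate_succ]

lemma eq_of_zipWith_sub {q : ℕ} (v v' : List (ZMod q)) (hl : v.length = v'.length)
    (h : List.zipWith (· - ·) v v' = List.replicate v.length 0) : v = v' := by
  induction v generalizing v' with
  | nil => exact (List.eq_nil_of_length_eq_zero hl.symm).symm
  | cons a v ih =>
    cases v' with
    | nil => simp at hl
    | cons b v' =>
      simp only [List.zipWith_cons_cons, List.length_cons, List.replicate_succ,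
        List.cons.injEq] at h
      rw [sub_eq_zero.mp h.1, ih v' (by simpa using hl) h.2]

lemma derivV_square (q ℓ : ℕ) (u v w : List (ZMod q)) (hv : v.length = ℓ) :
    derivV q ℓ (u ++ v ++ v ++ w) = derivV q ℓ (u ++ v) ++ List.replicate ℓ 0 ++
      List.zipWith (· - ·) w (v ++ w) := by
  rw [List.append_assoc (u ++ v), derivV_append q ℓ u v _ hv, List.zipWith_append rfl,
    zipWith_sub_self, hv, List.append_assoc]

lemma TDel.zDel {q ℓ : ℕ} {x y : List (ZMod q)} (h : TDel ℓ x y) :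
    x.take ℓ = y.take ℓ ∧ ZDel ℓ (derivV q ℓ x) (derivV q ℓ y) := by
  obtain ⟨u, v, w, hv, rfl, rfl⟩ := h
  refine ⟨?_, _, _, derivV_square q ℓ u v w hv, derivV_append q ℓ u v w hv⟩
  have hl : ℓ ≤ (u ++ v).length := by simp [hv]
  rw [List.append_assoc (u ++ v), List.take_append_of_le_length hl,
    List.take_append_of_le_length hl]

lemma exists_tDel_of_zDel {q ℓ : ℕ} (hℓ : 1 ≤ ℓ) {x v' : List (ZMod q)}
    (h : ZDel ℓ (derivV q ℓ x) v') :
    ∃ y, TDel ℓ x y ∧ derivV q ℓ y = v' := by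
  obtain ⟨a, b, hx, rfl⟩ := h
  have hlen : x.length - ℓ = a.length + ℓ + b.length := by
    rw [← length_derivV q ℓ x, hx]; simp [Nat.add_assoc]
  obtain ⟨u, v, z, hu, hv, rfl⟩ : ∃ u v z, u.length = a.length ∧ v.length = ℓ ∧
      x = u ++ v ++ z :=
    ⟨x.take a.length, (x.drop a.length).take ℓ, (x.drop a.length).drop ℓ,
      by simp; omega, by simp; omega, by simp⟩
  simp only [List.length_append] at hlen
  obtain ⟨s, w, hs, rfl⟩ : ∃ s w, s.length = ℓ ∧ z = s ++ w :=
    ⟨z.take ℓ, z.drop ℓ, by simp; omega, by simp⟩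
  rw [derivV_append q ℓ u v _ hv, List.zipWith_append (hs.trans hv.symm),
    List.append_assoc a] at hx
  obtain ⟨h1, h2⟩ := List.append_inj hx (by rw [length_derivV]; simp [hu, hv])
  obtain ⟨h3, h4⟩ := List.append_inj h2 (by simp [hs, hv])
  have hsv : s = v := eq_of_zipWith_sub s v (hs.trans hv.symm) (by rw [h3, hs])
  subst hsv
  refine ⟨u ++ s ++ w, ⟨u, s, w, hs, by simp, rfl⟩, ?_⟩
  rw [derivV_append q ℓ u s w hs, h1, h4]

/-- A word is recovered from its nonempty initial part `u` and its derivative, one symbol at a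
time; `u` acts as a window moving along the word. -/
lemma eq_of_zipWith_window {q : ℕ} (u z z' : List (ZMod q)) (hu : u ≠ [])
    (h : List.zipWith (· - ·) z (u ++ z) = List.zipWith (· - ·) z' (u ++ z')) : z = z' := by
  induction z generalizing u z' with
  | nil =>
    cases z' with
    | nil => rfl
    | cons b z' =>
      cases u with
      | nil => exact absurd rfl hu
      | cons c u => simp at h
  | cons a z ih =>
    cases u with
    | nil => exact absurd rfl hu
    | cons c u =>
      cases z' with
      | nil => simp at h
      | cons b z' =>
        simp only [List.cons_append, List.zipWith_cons_cons, List.cons.injEq] at h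
        have hab : a = b := sub_left_injective h.1
        subst hab
        rw [ih (u ++ [a]) z' (by simp) (by simpa using h.2)]

lemma eq_of_derivV_eq {q ℓ : ℕ} (hℓ : 1 ≤ ℓ) {x y : List (ZMod q)} (hx : ℓ ≤ x.length)
    (ht : x.take ℓ = y.take ℓ) (hd : derivV q ℓ x = derivV q ℓ y) : x = y := by
  have h1 : derivV q ℓ x = List.zipWith (· - ·) (x.drop ℓ) (x.take ℓ ++ x.drop ℓ) := by
    rw [List.take_append_drop]; rfl
  have h2 : derivV q ℓ y = List.zipWith (· - ·) (y.drop ℓ) (x.take ℓ ++ y.drop ℓ) := by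
    rw [ht, List.take_append_drop]; rfl
  have hne : x.take ℓ ≠ [] := by
    intro h
    have := congrArg List.length h
    rw [List.length_take, List.length_nil] at this
    omega
  have hz := eq_of_zipWith_window _ _ _ hne (h1.symm.trans (hd.trans h2))
  rw [← List.take_append_drop ℓ x, ht, hz, List.take_append_drop]

lemma reachK_tDel_invariants {q ℓ k : ℕ} (hℓ : 1 ≤ ℓ) {x y : List (ZMod q)}
    (h : reachK (TDel ℓ) k x y) :
    root q ℓ x = root q ℓ y ∧ (sig q ℓ x).length = (sig q ℓ y).length ∧
      l1diff (sig q ℓ x) (sig q ℓ y) ≤ k := by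
  induction k generalizing x with
  | zero =>
    have hxy : x = y := h
    subst hxy
    exact ⟨rfl, rfl, (l1diff_self _).le⟩
  | succ k ih =>
    obtain ⟨z, hz, hr⟩ := h
    obtain ⟨i1, i2, i3⟩ := ih hr
    obtain ⟨ht, hd⟩ := hz.zDel
    obtain ⟨j1, j2, j3⟩ := hd.invariants hℓ
    change (sig q ℓ x).length = (sig q ℓ z).length at j2
    change l1diff (sig q ℓ x) (sig q ℓ z) ≤ 1 at j3
    refine ⟨?_, j2.trans i2, ?_⟩
    · rw [← i1, root, root, ht, j1]
    · have := l1diff_triangle _ _ _ j2 i2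
      omega

/-- Removals of zeros from the derivative lift to tandem deletions of the word. -/
lemma reachK_lift {q ℓ k : ℕ} (hℓ : 1 ≤ ℓ) {x v : List (ZMod q)} (hx : ℓ ≤ x.length)
    (h : reachK (ZDel ℓ) k (derivV q ℓ x) v) :
    ∃ y, reachK (TDel ℓ) k x y ∧ x.take ℓ = y.take ℓ ∧ derivV q ℓ y = v ∧ ℓ ≤ y.length := by
  induction k generalizing x with
  | zero => exact ⟨x, rfl, rfl, h, hx⟩
  | succ k ih =>
    obtain ⟨s, hs, hr⟩ := h
    obtain ⟨z, hz, rfl⟩ := exists_tDel_of_zDel hℓ hs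
    have hzl : ℓ ≤ z.length := by
      obtain ⟨u, v, w, hv, -, rfl⟩ := hz
      simp [hv]
      omega
    obtain ⟨y, h1, h2, h3, h4⟩ := ih hzl hr
    exact ⟨y, ⟨z, hz, h1⟩, hz.zDel.1.trans h2, h3, h4⟩

/-- A code `C ⊆ Z_q^n` is `t`-tandem-deletion correcting (length `ℓ`) iff
`d_{τ,ℓ}(c₁,c₂) ≥ 2t+1` for all distinct codewords. -/
theorem stmt2 (q ℓ t n : ℕ) (hq : 2 ≤ q) (hℓ : 1 ≤ ℓ) (ht : 1 ≤ t) (hn : ℓ ≤ n)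
    (C : Set (List (ZMod q))) (hC : ∀ c ∈ C, c.length = n) :
    Correcting (TDel ℓ) t C ↔
      ∀ c₁ ∈ C, ∀ c₂ ∈ C, c₁ ≠ c₂ → ((2 * t + 1 : ℕ) : ℕ∞) ≤ tdDist q ℓ c₁ c₂ := by
  constructor
  · intro hcorr c₁ h₁ c₂ h₂ hne
    by_contra hlt
    apply hne
    rw [tdDist] at hlt
    split_ifs at hlt with hroot
    swap
    · exact absurd le_top hlt
    have hd : l1diff (sig q ℓ c₁) (sig q ℓ c₂) < 2 * t + 1 := by
      by_contra h
      exact hlt (by exact_mod_cast not_lt.mp h)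
    have hl₁ := hC c₁ h₁
    have hl₂ := hC c₂ h₂
    obtain ⟨v, k₁, k₂, r₁, r₂, hk⟩ := exists_common _ _ (congrArg Prod.snd hroot)
    -- Both words have length `n` and each removal costs `ℓ` symbols, so the step counts agree.
    have hkk : k₁ = k₂ := by
      have e₁ := reachK_zDel_length r₁
      have e₂ := reachK_zDel_length r₂
      rw [length_derivV, hl₁] at e₁
      rw [length_derivV, hl₂] at e₂
      have : k₁ * ℓ = k₂ * ℓ := by omega
      exact Nat.eq_of_mul_eq_mul_right hℓ this
    change k₁ + k₂ = l1diff (sig q ℓ c₁) (sig q ℓ c₂) at hk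
    obtain ⟨y₁, a₁, b₁, d₁, e₁⟩ := reachK_lift hℓ (by omega) r₁
    obtain ⟨y₂, a₂, b₂, d₂, e₂⟩ := reachK_lift hℓ (by omega) r₂
    have ht' : c₁.take ℓ = c₂.take ℓ := congrArg Prod.fst hroot
    have hy : y₁ = y₂ :=
      eq_of_derivV_eq hℓ e₁ (b₁.symm.trans (ht'.trans b₂)) (d₁.trans d₂.symm)
    subst hy
    exact hcorr c₁ h₁ c₂ h₂ ⟨y₁, ⟨k₁, by omega, a₁⟩, ⟨k₂, by omega, a₂⟩⟩
  · rintro hdist c₁ h₁ c₂ h₂ ⟨y, ⟨k₁, hk₁, r₁⟩, ⟨k₂, hk₂, r₂⟩⟩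
    by_contra hne
    have hd := hdist c₁ h₁ c₂ h₂ hne
    obtain ⟨a₁, l₁, d₁⟩ := reachK_tDel_invariants hℓ r₁
    obtain ⟨a₂, l₂, d₂⟩ := reachK_tDel_invariants hℓ r₂
    rw [tdDist, if_pos (a₁.trans a₂.symm)] at hd
    have hd' : 2 * t + 1 ≤ l1diff (sig q ℓ c₁) (sig q ℓ c₂) := by exact_mod_cast hd
    have htri := l1diff_triangle _ _ _ l₁ l₂.symm
    rw [l1diff_comm (sig q ℓ y)] at htri
    omega

end DupPaper
end

section
/- For all integers q ≥ 2, n ≥ 2 and every x ∈ Z_q^n, the size of the single palindromic duplication sphere for duplication length ℓ = 2 satisfies |S_{π,2}(x)| = n − Σ_{i=3}^{n} (i−2) r_i(x) = 2 r(x) − r_1(x), where r(x) is the number of runs of x and r_i(x) the number of runs of x of length exactly i. -/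
/-!
Let `D x` be the set of words obtained from `x` by exactly one palindromic duplication of
length `2`; lengths show that the sphere is the disjoint union of `{x}` and `D x`.
Duplicating at the first position or further right gives
`D (a b t) = {a b b a t} ∪ a · D (b t)`, and the new word `a b b a t` already lies in
`a · D (b t)` exactly when `t = c t'` with `a = b = c` (`new_word_mem_iff`; its core is
`eq_of_mem_dup`, a statement on words `p q t ∈ D t`). Hence `|D|` grows by one with each
prepended letter unless that letter extends a run of length at least two. The quantity
`2 r - r_1` obeys the same recursion, by inspection of the first run. The formula
`n - ∑ (i - 2) r_i` equals `2 r - r_1` because `n` is the sum of the run lengths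
(`sum_run_weights`).
-/

namespace DupPaper

variable {α : Type*}

/-! ### The set of single duplications -/

/-- The words obtained from `x` by exactly one palindromic duplication of length `2`. -/
def dupSet (x : List α) : Set (List α) := {y | PDup 2 x y}

theorem sphere_one_eq (x : List α) : sphere (PDup 2) 1 x = insert x (dupSet x) := by
  ext y
  simp only [sphere, dupSet, Set.mem_ofPred_eq, Set.mem_insert_iff]
  constructor
  · rintro ⟨k, hk, h⟩
    interval_cases k
    · left; exact h.symm
    · obtain ⟨z, hz, hzy⟩ := h
      have hzy' : z = y := hzy
      right; rwa [← hzy']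
  · rintro (h | h)
    · exact ⟨0, by omega, h.symm⟩
    · exact ⟨1, le_rfl, y, h, rfl⟩

theorem not_mem_dupSet_self (x : List α) : x ∉ dupSet x := by
  rintro ⟨u, v, w, hv, h1, h2⟩
  have e1 := congrArg List.length h1
  have e2 := congrArg List.length h2
  simp at e1 e2
  omega

theorem dupSet_nil : dupSet ([] : List α) = ∅ := by
  ext y
  simp only [Set.mem_empty_iff_false, iff_false]
  rintro ⟨u, v, w, hv, h1, -⟩
  have e1 := congrArg List.length h1
  simp at e1
  omega

theorem dupSet_singleton (a : α) : dupSet [a] = ∅ := by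
  ext y
  simp only [Set.mem_empty_iff_false, iff_false]
  rintro ⟨u, v, w, hv, h1, -⟩
  have e1 := congrArg List.length h1
  simp at e1
  omega

theorem dupSet_cons_cons (a b : α) (t : List α) :
    dupSet (a :: b :: t) = insert (a :: b :: b :: a :: t) (List.cons a '' dupSet (b :: t)) := by
  ext y
  simp only [dupSet, Set.mem_ofPred_eq, Set.mem_insert_iff, Set.mem_image]
  constructor
  · rintro ⟨u, v, w, hv, h1, h2⟩
    match u, v, hv with
    | [], [c, d], _ =>
      simp at h1 h2
      obtain ⟨rfl, rfl, rfl⟩ := h1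
      left; exact h2
    | e :: u, v, hv =>
      simp at h1 h2
      obtain ⟨rfl, h1⟩ := h1
      right
      exact ⟨_, ⟨u, v, w, hv, by simpa using h1, rfl⟩, by simp [h2]⟩
  · rintro (h | ⟨z, ⟨u, v, w, hv, h1, h2⟩, h⟩)
    · exact ⟨[], [a, b], t, rfl, by simp, by simp [h]⟩
    · exact ⟨a :: u, v, w, hv, by simp [h1], by simp [← h, h2]⟩

/-- If prepending `p q` to `t` has the same effect as some palindromic duplication in `t`,
then `p = q` is also the first letter of `t`. -/
theorem eq_of_mem_dup (t : List α) :
    ∀ p q : α, p :: q :: t ∈ dupSet t → p = q ∧ t.head? = some p := by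
  induction t with
  | nil => intro p q h; simp [dupSet_nil] at h
  | cons c s ih =>
    intro p q h
    cases s with
    | nil => simp [dupSet_singleton] at h
    | cons d s =>
      rw [dupSet_cons_cons] at h
      rcases h with h | ⟨z, hz, h⟩
      · simp at h
        obtain ⟨rfl, rfl, rfl, -⟩ := h
        simp
      · simp only [List.cons.injEq] at h
        obtain ⟨rfl, rfl⟩ := h
        have := ih q c hz
        simp [this.1]

theorem new_word_mem_iff (a b c : α) (t : List α) :
    a :: b :: b :: a :: c :: t ∈ List.cons a '' dupSet (b :: c :: t) ↔ a = b ∧ b = c := by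
  rw [Set.mem_image, dupSet_cons_cons]
  constructor
  · rintro ⟨z, hz, h⟩
    simp only [List.cons.injEq, true_and] at h
    subst h
    rcases hz with h | ⟨z, hz, h⟩
    · simp at h
      obtain ⟨rfl, rfl, -⟩ := h
      simp
    · simp only [List.cons.injEq, true_and] at h
      subst h
      obtain ⟨h1, h2⟩ := eq_of_mem_dup _ _ _ hz
      simp at h2
      exact ⟨h1.symm, h2.symm⟩
  · rintro ⟨rfl, rfl⟩
    exact ⟨_, Set.mem_insert _ _, rfl⟩

theorem dupSet_finite (x : List α) : (dupSet x).Finite := by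
  induction x with
  | nil => simp [dupSet_nil]
  | cons a s ih =>
    cases s with
    | nil => simp [dupSet_singleton]
    | cons b t =>
      rw [dupSet_cons_cons]
      exact (ih.image _).insert _

theorem ncard_dupSet_pair (a b : α) : (dupSet [a, b]).ncard = 1 := by
  rw [dupSet_cons_cons, dupSet_singleton]
  simp

theorem ncard_dupSet_cons [DecidableEq α] (a b c : α) (t : List α) :
    (dupSet (a :: b :: c :: t)).ncard
      = (dupSet (b :: c :: t)).ncard + if a = b ∧ b = c then 0 else 1 := by
  have himg : (List.cons a '' dupSet (b :: c :: t)).ncard = (dupSet (b :: c :: t)).ncard :=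
    Set.ncard_image_of_injective _ (List.cons_injective)
  rw [dupSet_cons_cons]
  split_ifs with h
  · rw [Set.insert_eq_of_mem ((new_word_mem_iff a b c t).2 h), himg, add_zero]
  · rw [Set.ncard_insert_of_notMem (fun hmem => h ((new_word_mem_iff a b c t).1 hmem))
      ((dupSet_finite _).image _), himg]

/-! ### Runs -/

/-- The first run of a nonempty word begins with its first letter; it has length one exactly
when the second letter is absent or different. -/
theorem runs_cons_eq [DecidableEq α] (a : α) (t : List α) :
    ∃ r rs, runs (a :: t) = (a :: r) :: rs ∧ (r = [] ↔ t.head? ≠ some a) := by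
  induction t generalizing a with
  | nil => exact ⟨[], [], by simp [runs]⟩
  | cons b t ih =>
    obtain ⟨r, rs, h, -⟩ := ih b
    by_cases hab : b = a
    · subst hab
      exact ⟨b :: r, rs, by rw [runs, h]; simp, by simp⟩
    · exact ⟨[], (b :: r) :: rs, by rw [runs, h]; simp [hab], by simp [hab]⟩

theorem runs_weight_cons [DecidableEq α] (a b c : α) (t : List α) :
    2 * (numRuns (a :: b :: c :: t) : ℤ) - (numRunsEq (a :: b :: c :: t) 1 : ℤ)
      = 2 * (numRuns (b :: c :: t) : ℤ) - (numRunsEq (b :: c :: t) 1 : ℤ)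
        + if a = b ∧ b = c then 0 else 1 := by
  obtain ⟨r, rs, h, hr⟩ := runs_cons_eq b (c :: t)
  have h' : runs (a :: b :: c :: t)
      = if b = a then (a :: b :: r) :: rs else [a] :: (b :: r) :: rs := by
    rw [runs, h]; simp
  simp only [List.head?_cons, ne_eq, Option.some.injEq] at hr
  unfold numRuns numRunsEq
  rw [h', h]
  by_cases hab : b = a
  · subst hab
    by_cases hbc : b = c
    · subst hbc
      have : r ≠ [] := by simpa using hr
      simp [this]
    · have : r = [] := hr.2 (fun h => hbc h.symm)
      subst this
      simp [hbc]; ring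
  · have hab' : a ≠ b := fun h => hab h.symm
    by_cases hl : r = []
    · simp [hab, hab', hl]; ring
    · simp [hab, hab', hl]; ring

theorem ncard_dupSet_add_one [DecidableEq α] (x : List α) (hx : x ≠ []) :
    ((dupSet x).ncard : ℤ) + 1 = 2 * (numRuns x : ℤ) - (numRunsEq x 1 : ℤ) := by
  induction x with
  | nil => exact absurd rfl hx
  | cons a s ih =>
    match s, ih with
    | [], _ => simp [dupSet_singleton, numRuns, numRunsEq, runs]
    | [b], _ =>
      rw [ncard_dupSet_pair]
      by_cases hab : b = a <;> simp [numRuns, numRunsEq, runs, hab]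
    | b :: c :: t, ih =>
      rw [runs_weight_cons, ncard_dupSet_cons, ← ih (by simp)]
      push_cast
      ring

theorem flatten_runs [DecidableEq α] (x : List α) : (runs x).flatten = x := by
  induction x with
  | nil => simp [runs]
  | cons a t ih =>
    rw [runs]
    cases h : runs t with
    | nil => rw [h] at ih; simp at ih; simp [ih]
    | cons r rs =>
      rw [h] at ih
      simp only [List.flatten_cons] at ih
      dsimp only
      split_ifs <;> simp [ih]

theorem ne_nil_of_mem_runs [DecidableEq α] (x : List α) : ∀ r ∈ runs x, r ≠ [] := by
  induction x with
  | nil => simp [runs]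
  | cons a t ih =>
    rw [runs]
    cases h : runs t with
    | nil => simp
    | cons r rs =>
      rw [h] at ih
      dsimp only
      split_ifs <;> simp_all

/-- A block of length `m ≥ 1` contributes `m - max (m - 2) 0 = 2 - [m = 1]` to both sides;
summing over an arbitrary list of nonempty blocks of length at most `n` gives the identity. -/
theorem sum_run_weights (n : ℕ) (L : List (List α))
    (hL : ∀ r ∈ L, 1 ≤ r.length ∧ r.length ≤ n) :
    (L.flatten.length : ℤ) - ∑ i ∈ Finset.Icc 3 n,
        ((i : ℤ) - 2) * ((L.filter (fun r => r.length = i)).length : ℤ)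
      = 2 * (L.length : ℤ) - ((L.filter (fun r => r.length = 1)).length : ℤ) := by
  induction L with
  | nil => simp
  | cons r L ih =>
    have ih := ih (fun s hs => hL s (List.mem_cons_of_mem _ hs))
    obtain ⟨h1, h2⟩ := hL r List.mem_cons_self
    have key : ∀ i : ℕ, (((r :: L).filter (fun r => r.length = i)).length : ℤ)
        = ((L.filter (fun r => r.length = i)).length : ℤ) + if r.length = i then 1 else 0 := by
      intro i
      by_cases h : r.length = i <;> simp [h]
    simp only [key, mul_add, Finset.sum_add_distrib, mul_ite, mul_one, mul_zero,
      Finset.sum_ite_eq, Finset.mem_Icc]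
    simp only [List.flatten_cons, List.length_append, List.length_cons]
    push_cast at ih ⊢
    split_ifs <;> omega

/-! ### The sphere size -/

/-- The size of the single palindromic duplication sphere for `ℓ = 2`:
`|S_{π,2}(x)| = n − Σ_{i=3}^n (i−2) r_i(x) = 2 r(x) − r_1(x)`. -/
theorem stmt8 (q n : ℕ) (hq : 2 ≤ q) (hn : 2 ≤ n) (x : List (ZMod q)) (hx : x.length = n) :
    ((sphere (PDup 2) 1 x).ncard : ℤ)
        = (n : ℤ) - ∑ i ∈ Finset.Icc 3 n, ((i : ℤ) - 2) * (numRunsEq x i : ℤ) ∧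
    ((sphere (PDup 2) 1 x).ncard : ℤ) = 2 * (numRuns x : ℤ) - (numRunsEq x 1 : ℤ) := by
  have hne : x ≠ [] := by
    rintro rfl
    simp at hx
    omega
  have hcard : ((sphere (PDup 2) 1 x).ncard : ℤ)
      = 2 * (numRuns x : ℤ) - (numRunsEq x 1 : ℤ) := by
    rw [sphere_one_eq, Set.ncard_insert_of_notMem (not_mem_dupSet_self x) (dupSet_finite x),
      ← ncard_dupSet_add_one x hne]
    push_cast
    rfl
  refine ⟨?_, hcard⟩
  have hlen : ∀ r ∈ runs x, 1 ≤ r.length ∧ r.length ≤ n := by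
    intro r hr
    refine ⟨List.length_pos_iff.2 (ne_nil_of_mem_runs x r hr), ?_⟩
    have := (List.sublist_flatten_of_mem hr).length_le
    rwa [flatten_runs, hx] at this
  have hsum := sum_run_weights n (runs x) hlen
  rw [flatten_runs, hx] at hsum
  rw [hcard]
  exact hsum.symm

end DupPaper
end
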